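/- Let α = 3, β = 4 (so b = 7) and T = 1/3. For every integer N ≥ 7 there exist real numbers γ_1, …, γ_8, not all zero, such that the N×N matrix 𝓛 = γ_1·I + γ_2·Λ_N + γ_3·B_N + γ_4·Λ_N² + γ_5·(Λ_N B_N + B_N Λ_N) + γ_6·(B_N Λ_N² + Λ_N² B_N) + γ_7·Λ_N B_N Λ_N + γ_8·[(Λ_N³ B_N + B_N Λ_N³) − (Λ_N B_N Λ_N² + Λ_N² B_N Λ_N)] is not a scalar multiple of the identity and commutes with the N×N matrix M with entries M_{jk} = ∫_{−1}^{1/3} p̃_j(x) p̃_k(x) (1−x)³(1+x)⁴/(x−7)² dx, where B_N is the N×N matrix with entries (B_N)_{jk} = ∫_{−1}^{1} (x−7)² p̃_j(x) p̃_k(x) (1−x)³(1+x)⁴/(x−7)² dx and Λ_N is the diagonal N×N matrix with diagonal entries (n−1)(n+7) for n = 1, …, N. -/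

import Mathlib

open Real MeasureTheory

/-- The generalized binomial coefficient `C(r, k) = r (r-1) ⋯ (r-k+1) / k!`. -/
noncomputable def genChoose (r : ℝ) (k : ℕ) : ℝ :=
  (∏ i ∈ Finset.range k, (r - i)) / (Nat.factorial k : ℝ)

/-- The classical Jacobi polynomials, via the explicit formula
`p_n^{(α,β)}(x) = Σ_{s=0}^n C(n+α, n-s) C(n+β, s) ((x-1)/2)^s ((x+1)/2)^{n-s}`,
which are orthogonal on `(-1,1)` w.r.t. `(1-x)^α (1+x)^β` and normalized by
`p_n^{(α,β)}(1) = C(n+α, n)`. -/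
noncomputable def jacobiP (α β : ℝ) (n : ℕ) (x : ℝ) : ℝ :=
  ∑ s ∈ Finset.range (n + 1),
    genChoose ((n : ℝ) + α) (n - s) * genChoose ((n : ℝ) + β) s *
      ((x - 1) / 2) ^ s * ((x + 1) / 2) ^ (n - s)

/-- `b = (β+α)/(β-α)`. -/
noncomputable def bJac (α β : ℝ) : ℝ := (β + α) / (β - α)

/-- The exceptional Jacobi polynomials (missing degree `0`):
`p̂_n(x) = (b p_{n-1} - p_{n-2})/(2n+β+α-2) - p_{n-1} (x-b)/2` for `n ≥ 1`,
with the conventions `p̂_0 = 0` (and `p_{-1} = 0`, handled by the guard `n = 1`). -/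
noncomputable def excJacobi (α β : ℝ) (n : ℕ) (x : ℝ) : ℝ :=
  if n = 0 then 0
  else (bJac α β * jacobiP α β (n - 1) x - (if n = 1 then 0 else jacobiP α β (n - 2) x)) /
        (2 * (n : ℝ) + β + α - 2)
      - jacobiP α β (n - 1) x * (x - bJac α β) / 2

/-- `‖p̂_n‖²` for `α = 3`, `β = 4` (so `b = 7`). -/
noncomputable def normSqJ (n : ℕ) : ℝ :=
  ∫ x in (-1 : ℝ)..1, (excJacobi 3 4 n x) ^ 2 * (1 - x) ^ 3 * (1 + x) ^ 4 / (x - 7) ^ 2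

/-- The orthonormal exceptional Jacobi polynomials `p̃_n = p̂_n / ‖p̂_n‖` for `α = 3`, `β = 4`. -/
noncomputable def pTil (n : ℕ) (x : ℝ) : ℝ := excJacobi 3 4 n x / Real.sqrt (normSqJ n)

/-- `M_{jk} = ∫_{-1}^{1/3} p̃_j p̃_k (1-x)³(1+x)⁴/(x-7)² dx`, `1 ≤ j,k ≤ N`. -/
noncomputable def MMat (N : ℕ) : Matrix (Fin N) (Fin N) ℝ := fun j k =>
  ∫ x in (-1 : ℝ)..(1/3 : ℝ),
    pTil ((j : ℕ) + 1) x * pTil ((k : ℕ) + 1) x * (1 - x) ^ 3 * (1 + x) ^ 4 / (x - 7) ^ 2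

/-- `(B_N)_{jk} = ∫_{-1}^{1} (x-7)² p̃_j p̃_k (1-x)³(1+x)⁴/(x-7)² dx`. -/
noncomputable def BMat (N : ℕ) : Matrix (Fin N) (Fin N) ℝ := fun j k =>
  ∫ x in (-1 : ℝ)..1,
    (x - 7) ^ 2 * pTil ((j : ℕ) + 1) x * pTil ((k : ℕ) + 1) x *
      (1 - x) ^ 3 * (1 + x) ^ 4 / (x - 7) ^ 2

/-- `Λ_N` is diagonal with entries `(n-1)(n+7)` for `n = 1, …, N`. -/
noncomputable def LamMat (N : ℕ) : Matrix (Fin N) (Fin N) ℝ :=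
  Matrix.diagonal fun i => (((i : ℕ) + 1 : ℝ) - 1) * (((i : ℕ) + 1 : ℝ) + 7)

/-!
Let `E` be the differential operator whose eigenfunctions are the exceptional Jacobi polynomials and
let `φ = (x-b)²`. In the orthonormal basis, multiplication by `φ` is a matrix of bandwidth two,
because the exceptional polynomials span a hyperplane of the polynomials that contains all the
multiples of `φ`. The word `γ` in the matrices of `E` and `φ` is the compression of the same word
`D` in the operators themselves. Two conditions on `γ` make it commute with the Gram matrix of the
truncated interval `[-1, τ]`.

* `D` is formally self-adjoint on `[-1, τ]`. Modulo multiplication operators, `D` has the form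
  `E a₄ E + E χ + χ E` for functions `a₄`, `χ`, since the double commutator of `E` with a function
  is again of this form, with lower order. The boundary terms at `τ` disappear when `a₄` has a
  double zero and `χ` a simple zero there.
* `D` leaves the span of the first `N` polynomials invariant, that is, the factors by which `D`
  changes the entries `(N-2, N)`, `(N-1, N)`, `(N-1, N+1)` of the band, counted from `0`, vanish.
  Writing the eigenvalues of `E` as `u² - σ²`, the factors two steps off the diagonal are the values
  of one quadratic polynomial in `u²`, which can be prescribed up to its leading coefficient.

Then the product of the matrix of `D` with the Gram matrix is symmetric. Both matrices being
symmetric, they commute.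
-/

section

open Polynomial

/-! ### Differential relations for Jacobi polynomials -/

section

theorem genChoose_succ (r : ℝ) (k : ℕ) :
    ((k : ℝ) + 1) * genChoose r (k + 1) = (r - k) * genChoose r k := by
  simp only [genChoose, Finset.prod_range_succ, Nat.factorial_succ]
  push_cast
  field_simp

theorem sub_mul_genChoose_add_one (r : ℝ) (k : ℕ) :
    (r + 1 - k) * genChoose (r + 1) k = (r + 1) * genChoose r k := by
  induction k with
  | zero => simp [genChoose]
  | succ k ih =>
    have hk : (k : ℝ) + 1 ≠ 0 := by positivity
    refine mul_left_cancel₀ hk ?_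
    push_cast
    linear_combination (r - k) * genChoose_succ (r + 1) k - (r + 1) * genChoose_succ r k
      + (r - k) * ih

theorem genChoose_pos {r : ℝ} {k : ℕ} (h : (k : ℝ) - 1 < r) : 0 < genChoose r k := by
  refine div_pos (Finset.prod_pos fun i hi => ?_) (by positivity)
  have : (i : ℝ) + 1 ≤ k := by exact_mod_cast Finset.mem_range.1 hi
  linarith

/-- The coefficient of `((x-1)/2)^s ((x+1)/2)^(n-s)` in `jacobiP α β n x`, for `s ≤ n`. -/
noncomputable def jacobiCoeff (α β : ℝ) (n s : ℕ) : ℝ :=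
  genChoose (n + α) (n - s) * genChoose (n + β) s

theorem jacobiCoeff_succ_left (α β : ℝ) {n s : ℕ} (hs : s ≤ n) :
    ((n : ℝ) + 1 + α) * (n + 1 + β) * jacobiCoeff α β n s
      = (n + 1 - s) * (n + 1 + β - s) * jacobiCoeff α β (n + 1) s := by
  obtain ⟨k, rfl⟩ := Nat.exists_eq_add_of_le hs
  have hα := sub_mul_genChoose_add_one (s + k + α) k
  have hα' := genChoose_succ (s + k + α + 1) k
  have hβ := sub_mul_genChoose_add_one (s + k + β) s
  simp only [jacobiCoeff, Nat.add_sub_cancel_left, show s + k + 1 - s = k + 1 by omega]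
  push_cast
  rw [show (s : ℝ) + k + 1 + α = s + k + α + 1 by ring,
    show (s : ℝ) + k + 1 + β = s + k + β + 1 by ring]
  linear_combination (-(s + k + β + 1) * genChoose (s + k + β) s) * (hα + hα')
    - (k + 1) * genChoose (s + k + α + 1) (k + 1) * hβ

theorem jacobiCoeff_succ_succ (α β : ℝ) {n s : ℕ} (hs : s ≤ n) :
    ((n : ℝ) + 1 + α) * (n + 1 + β) * jacobiCoeff α β n s
      = (s + 1) * (s + 1 + α) * jacobiCoeff α β (n + 1) (s + 1) := by
  obtain ⟨k, rfl⟩ := Nat.exists_eq_add_of_le hs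
  have hα := sub_mul_genChoose_add_one (s + k + α) k
  have hβ := sub_mul_genChoose_add_one (s + k + β) s
  have hβ' := genChoose_succ (s + k + β + 1) s
  simp only [jacobiCoeff, Nat.add_sub_cancel_left, show s + k + 1 - (s + 1) = k by omega]
  push_cast
  rw [show (s : ℝ) + k + 1 + α = s + k + α + 1 by ring,
    show (s : ℝ) + k + 1 + β = s + k + β + 1 by ring]
  linear_combination (-(s + k + β + 1) * genChoose (s + k + β) s) * hα
    - (s + 1 + α) * genChoose (s + k + α + 1) k * (hβ + hβ')

/-- The polynomial `∑ f(s) c_{n,s} ((X-1)/2)^s ((X+1)/2)^(n-s)` obtained from the `n`-th Jacobi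
polynomial by weighting its terms; the relations between contiguous Jacobi polynomials are
relations between such weights. -/
noncomputable def jacobiWeighted (α β : ℝ) (n : ℕ) (f : ℝ → ℝ) : ℝ[X] :=
  ∑ s ∈ Finset.range (n + 1),
    C (f s * jacobiCoeff α β n s) * (C (1 / 2) * (X - 1)) ^ s * (C (1 / 2) * (X + 1)) ^ (n - s)

variable (α β : ℝ)

theorem C_mul_jacobiWeighted_add (n : ℕ) (c d : ℝ) (f g : ℝ → ℝ) :
    C c * jacobiWeighted α β n f + C d * jacobiWeighted α β n g
      = jacobiWeighted α β n fun s => c * f s + d * g s := by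
  simp only [jacobiWeighted, Finset.mul_sum, ← Finset.sum_add_distrib, add_mul, C_add, C_mul,
    mul_assoc]

theorem X_add_one_mul_jacobiWeighted (n : ℕ) (f : ℝ → ℝ) :
    C (((n : ℝ) + 1 + α) * (n + 1 + β)) * (C (1 / 2) * (X + 1) * jacobiWeighted α β n f)
      = jacobiWeighted α β (n + 1) fun s => (n + 1 - s) * (n + 1 + β - s) * f s := by
  rw [jacobiWeighted, jacobiWeighted, Finset.sum_range_succ _ (n + 1)]
  simp only [Nat.cast_add, Nat.cast_one, sub_self, zero_mul, C_0, add_zero, Finset.mul_sum]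
  refine Finset.sum_congr rfl fun s hs => ?_
  have hs' : s ≤ n := Nat.lt_succ_iff.1 (Finset.mem_range.1 hs)
  have h := congrArg C (jacobiCoeff_succ_left α β hs')
  rw [Nat.succ_sub hs', pow_succ]
  simp only [C_mul] at h ⊢
  linear_combination C (f s) * (C (1 / 2) * (X - 1)) ^ s
    * ((C (1 / 2) * (X + 1)) ^ (n - s) * (C (1 / 2) * (X + 1))) * h

theorem X_sub_one_mul_jacobiWeighted (n : ℕ) (f : ℝ → ℝ) :
    C (((n : ℝ) + 1 + α) * (n + 1 + β)) * (C (1 / 2) * (X - 1) * jacobiWeighted α β n f)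
      = jacobiWeighted α β (n + 1) fun s => s * (s + α) * f (s - 1) := by
  rw [jacobiWeighted, jacobiWeighted, Finset.sum_range_succ' _ (n + 1)]
  simp only [Nat.cast_zero, zero_mul, C_0, add_zero, Finset.mul_sum]
  refine Finset.sum_congr rfl fun s hs => ?_
  have h := congrArg C (jacobiCoeff_succ_succ α β (Nat.lt_succ_iff.1 (Finset.mem_range.1 hs)))
  rw [Nat.add_sub_add_right, pow_succ]
  push_cast
  rw [add_sub_cancel_right]
  simp only [C_mul] at h ⊢
  linear_combination C (f s) * ((C (1 / 2) * (X - 1)) ^ s * (C (1 / 2) * (X - 1)))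
    * (C (1 / 2) * (X + 1)) ^ (n - s) * h

theorem C_half_mul_two : (C (1 / 2) : ℝ[X]) * 2 = 1 := by
  rw [← C_ofNat, ← C_mul]; norm_num

theorem jacobiWeighted_succ (n : ℕ) (f : ℝ → ℝ) :
    C (((n : ℝ) + 1 + α) * (n + 1 + β)) * jacobiWeighted α β n f
      = jacobiWeighted α β (n + 1) fun s =>
          (n + 1 - s) * (n + 1 + β - s) * f s - s * (s + α) * f (s - 1) := by
  have hV := X_add_one_mul_jacobiWeighted α β n f
  have hU := X_sub_one_mul_jacobiWeighted α β n f
  have hadd := C_mul_jacobiWeighted_add α β (n + 1) 1 (-1)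
    (fun s => (n + 1 - s) * (n + 1 + β - s) * f s) fun s => s * (s + α) * f (s - 1)
  simp only [C_neg, C_1, one_mul, neg_one_mul, ← hV, ← hU, ← sub_eq_add_neg] at hadd
  rw [← hadd]
  linear_combination -C (((n : ℝ) + 1 + α) * (n + 1 + β)) * jacobiWeighted α β n f * C_half_mul_two

theorem X_mul_jacobiWeighted (n : ℕ) (f : ℝ → ℝ) :
    C (((n : ℝ) + 1 + α) * (n + 1 + β)) * (X * jacobiWeighted α β n f)
      = jacobiWeighted α β (n + 1) fun s =>
          (n + 1 - s) * (n + 1 + β - s) * f s + s * (s + α) * f (s - 1) := by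
  have hV := X_add_one_mul_jacobiWeighted α β n f
  have hU := X_sub_one_mul_jacobiWeighted α β n f
  have hadd := C_mul_jacobiWeighted_add α β (n + 1) 1 1
    (fun s => (n + 1 - s) * (n + 1 + β - s) * f s) fun s => s * (s + α) * f (s - 1)
  simp only [C_1, one_mul, ← hV, ← hU] at hadd
  rw [← hadd]
  linear_combination
    -C (((n : ℝ) + 1 + α) * (n + 1 + β)) * X * jacobiWeighted α β n f * C_half_mul_two

theorem mul_derivative_jacobiWeighted (n : ℕ) (f : ℝ → ℝ) :
    (1 - X ^ 2) * derivative (jacobiWeighted α β n f)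
      = (n : ℝ[X]) * (1 - X) * jacobiWeighted α β n f
        - 2 * jacobiWeighted α β n fun s => s * f s := by
  have hC := C_half_mul_two
  simp only [jacobiWeighted, derivative_sum, Finset.mul_sum, ← Finset.sum_sub_distrib]
  refine Finset.sum_congr rfl fun s hs => ?_
  obtain ⟨k, rfl⟩ := Nat.exists_eq_add_of_le (Nat.lt_succ_iff.1 (Finset.mem_range.1 hs))
  have hpow (p : ℝ[X]) (j : ℕ) : p * (j * p ^ (j - 1)) = j * p ^ j := by
    rcases j with _ | j
    · simp
    · rw [Nat.add_sub_cancel]; ring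
  have hs := hpow (C (1 / 2) * (X - 1)) s
  have hk := hpow (C (1 / 2) * (X + 1)) k
  simp only [Nat.add_sub_cancel_left, derivative_mul, derivative_C, derivative_pow, derivative_sub,
    derivative_add, derivative_X, derivative_one, C_mul, map_natCast, Nat.cast_add]
  have hu : (2 : ℝ[X]) * (C (1 / 2) * (X - 1)) = X - 1 := by linear_combination (X - 1) * hC
  have hv : (2 : ℝ[X]) * (C (1 / 2) * (X + 1)) = X + 1 := by linear_combination (X + 1) * hC
  generalize (C (1 / 2) * (X - 1) : ℝ[X]) = u at *
  generalize (C (1 / 2) * (X + 1) : ℝ[X]) = v at *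
  have huv : (1 - X ^ 2) * C (1 / 2) = -2 * u * v := by
    linear_combination C (1 / 2) * (X + 1) * hu + 2 * C (1 / 2) * u * hv - 2 * u * v * hC
  linear_combination C (f s) * C (jacobiCoeff α β (s + k) s)
    * ((s * u ^ (s - 1) * v ^ k + k * u ^ s * v ^ (k - 1)) * huv - 2 * v * v ^ k * hs
      - 2 * u * u ^ s * hk - s * u ^ s * v ^ k * hv - k * u ^ s * v ^ k * hu)

/-- `jacobiP α β n` as a polynomial. -/
noncomputable def jacobiPoly (n : ℕ) : ℝ[X] :=
  jacobiWeighted α β n fun _ => 1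

theorem eval_jacobiPoly (n : ℕ) (x : ℝ) : (jacobiPoly α β n).eval x = jacobiP α β n x := by
  simp only [jacobiPoly, jacobiWeighted, jacobiP, jacobiCoeff, eval_finsetSum, eval_mul, eval_C,
    eval_pow, eval_sub, eval_add, eval_X, eval_one, one_mul, one_div, inv_mul_eq_div]

/-- The Jacobi polynomial of degree one less, `0` when there is none. -/
noncomputable def jacobiPred : ℕ → ℝ[X]
  | 0 => 0
  | n + 1 => jacobiPoly α β n

variable {α β}

theorem jacobiPoly_lowering (n : ℕ) :
    C (2 * n + α + β) * ((1 - X ^ 2) * derivative (jacobiPoly α β n))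
      = C (n : ℝ) * (C (α - β) - C (2 * n + α + β) * X) * jacobiPoly α β n
        + C (2 * (n + α) * (n + β)) * jacobiPred α β n := by
  have hderiv := mul_derivative_jacobiWeighted α β n fun _ => 1
  have hpred : C ((n + α) * (n + β)) * jacobiPred α β n
      = C (n * (n + β)) * jacobiPoly α β n
        + C (-(2 * n + α + β)) * jacobiWeighted α β n fun s => s * 1 := by
    rcases n with _ | n
    · simp [jacobiPred, jacobiWeighted]
    rw [jacobiPoly, C_mul_jacobiWeighted_add, jacobiPred, jacobiPoly, Nat.cast_succ,
      jacobiWeighted_succ]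
    congr 1
    funext s
    ring
  simp only [jacobiPoly] at hpred ⊢
  simp only [C_add, C_mul, C_neg, C_sub, map_natCast, map_ofNat] at hderiv hpred ⊢
  linear_combination (2 * (n : ℝ[X]) + C α + C β) * hderiv - 2 * hpred

theorem jacobiPred_raising (hα : -1 < α) (hβ : -1 < β) (n : ℕ) :
    C (2 * n + α + β) * ((1 - X ^ 2) * derivative (jacobiPred α β n))
      = C (n + α + β) * (C (2 * n + α + β) * X + C (α - β)) * jacobiPred α β n
        - C (2 * n * (n + α + β)) * jacobiPoly α β n := by
  rcases n with _ | n
  · simp [jacobiPred]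
  have hne : C (((n : ℝ) + 1 + α) * (n + 1 + β)) ≠ 0 := by
    have : (0 : ℝ) ≤ n := n.cast_nonneg
    exact C_ne_zero.2 (mul_pos (by linarith) (by linarith)).ne'
  have hderiv := mul_derivative_jacobiWeighted α β n fun _ => 1
  have hone := jacobiWeighted_succ α β n fun _ => 1
  have hid := jacobiWeighted_succ α β n fun s => s * 1
  have hX := X_mul_jacobiWeighted α β n fun _ => 1
  have hsucc :
      C ((n + 1 + α + β) * (α - β) - n * (2 * (n + 1) + α + β))
          * (C (((n : ℝ) + 1 + α) * (n + 1 + β)) * jacobiPoly α β n)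
        + C ((2 * n + 1 + α + β) * (2 * (n + 1) + α + β))
          * (C (((n : ℝ) + 1 + α) * (n + 1 + β)) * (X * jacobiPoly α β n))
      = C (-(2 * (2 * (n + 1) + α + β))) * (C (((n : ℝ) + 1 + α) * (n + 1 + β))
          * jacobiWeighted α β n fun s => s * 1)
        + C (2 * (n + 1) * (n + 1 + α + β) * ((n + 1 + α) * (n + 1 + β)))
          * jacobiPoly α β (n + 1) := by
    simp only [jacobiPoly, hone, hX, hid, C_mul_jacobiWeighted_add]
    congr 1
    funext s
    ring
  refine mul_left_cancel₀ hne ?_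
  simp only [jacobiPred, jacobiPoly, Nat.cast_succ] at hsucc ⊢
  simp only [C_add, C_mul, C_sub, C_neg, map_natCast, map_ofNat, C_1] at hderiv hsucc ⊢
  linear_combination ((n : ℝ[X]) + 1 + C α) * (n + 1 + C β) * (2 * ((n : ℝ[X]) + 1) + C α + C β)
    * hderiv - hsucc

end

/-! ### The exceptional Jacobi operator -/

section

variable {α β : ℝ}

theorem natDegree_le_and_coeff_jacobiWeighted (α β : ℝ) (n : ℕ) (f : ℝ → ℝ) :
    (jacobiWeighted α β n f).natDegree ≤ n ∧ (jacobiWeighted α β n f).coeff n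
      = (∑ s ∈ Finset.range (n + 1), f s * jacobiCoeff α β n s) * (1 / 2) ^ n := by
  have hlin (c : ℝ) (k : ℕ) : ((C (1 / 2) * (X + C c)) ^ k : ℝ[X]).natDegree ≤ k
      ∧ ((C (1 / 2) * (X + C c)) ^ k : ℝ[X]).coeff k = (1 / 2) ^ k := by
    have h1 : (C (1 / 2) * (X + C c) : ℝ[X]).natDegree ≤ 1 := by compute_degree
    refine ⟨(natDegree_pow_le_of_le k h1).trans (mul_one k).le, ?_⟩
    simpa [coeff_C] using coeff_pow_of_natDegree_le (m := k) h1
  have hterm (c : ℝ) {s : ℕ} (hs : s ≤ n) :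
      (C c * (C (1 / 2) * (X - 1)) ^ s * (C (1 / 2) * (X + 1)) ^ (n - s) : ℝ[X]).natDegree ≤ n ∧
      (C c * (C (1 / 2) * (X - 1)) ^ s * (C (1 / 2) * (X + 1)) ^ (n - s) : ℝ[X]).coeff n
        = c * (1 / 2) ^ n := by
    obtain ⟨k, rfl⟩ := Nat.exists_eq_add_of_le hs
    obtain ⟨hs, cs⟩ := hlin (-1) s
    obtain ⟨hk, ck⟩ := hlin 1 k
    rw [C_neg, C_1, ← sub_eq_add_neg] at hs cs
    rw [C_1] at hk ck
    rw [add_tsub_cancel_left, mul_assoc]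
    refine ⟨(natDegree_C_mul_le _ _).trans (natDegree_mul_le_of_le hs hk), ?_⟩
    rw [coeff_C_mul, coeff_mul_add_eq_of_natDegree_le hs hk, cs, ck, pow_add]
  refine ⟨natDegree_sum_le_of_forall_le _ _ fun s hs => (hterm _ (by grind)).1, ?_⟩
  rw [jacobiWeighted, finsetSum_coeff, Finset.sum_mul]
  exact Finset.sum_congr rfl fun s hs => (hterm _ (by grind)).2

theorem natDegree_jacobiPoly_le (α β : ℝ) (n : ℕ) : (jacobiPoly α β n).natDegree ≤ n :=
  (natDegree_le_and_coeff_jacobiWeighted α β n _).1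

theorem natDegree_jacobiPred_le (α β : ℝ) (n : ℕ) : (jacobiPred α β n).natDegree ≤ n := by
  rcases n with _ | n
  · exact natDegree_zero.le
  · exact (natDegree_jacobiPoly_le α β n).trans n.le_succ

theorem coeff_jacobiPoly_pos (hα : -1 < α) (hβ : -1 < β) (n : ℕ) :
    0 < (jacobiPoly α β n).coeff n := by
  rw [jacobiPoly, (natDegree_le_and_coeff_jacobiWeighted α β n _).2]
  refine mul_pos (Finset.sum_pos (fun s hs => ?_) ⟨0, by simp⟩) (by positivity)
  have hs' : (s : ℝ) ≤ n := by exact_mod_cast Nat.lt_succ_iff.1 (Finset.mem_range.1 hs)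
  have hns : ((n - s : ℕ) : ℝ) ≤ n := by exact_mod_cast n.sub_le s
  rw [one_mul]
  exact mul_pos (genChoose_pos (by linarith)) (genChoose_pos (by linarith))

/-- The parameters for which the exceptional Jacobi polynomials form an orthogonal system on
`[-1, 1]`: the weights are integrable and, `α` and `β` having the same sign, the pole
`b = (β+α)/(β-α)` lies outside `[-1, 1]`. -/
structure ExcAdmissible (α β : ℝ) : Prop where
  neg_one_lt_left : -1 < α
  neg_one_lt_right : -1 < β
  mul_pos : 0 < α * β
  ne : α ≠ β

theorem ExcAdmissible.left_eq (h : ExcAdmissible α β) :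
    α = (β - α) / 2 * (bJac α β - 1) := by
  have := sub_ne_zero.2 h.ne.symm
  rw [bJac]
  field_simp
  ring

theorem ExcAdmissible.right_eq (h : ExcAdmissible α β) :
    β = (β - α) / 2 * (bJac α β + 1) := by
  linear_combination h.left_eq

theorem ExcAdmissible.one_lt_bJac_sq (h : ExcAdmissible α β) : 1 < bJac α β ^ 2 := by
  have hne := sub_ne_zero.2 h.ne.symm
  rw [bJac, div_pow, one_lt_div (by positivity)]
  nlinarith [h.mul_pos]

theorem ExcAdmissible.sub_bJac_ne_zero (h : ExcAdmissible α β) {x : ℝ}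
    (hx : x ∈ Set.Icc (-1 : ℝ) 1) : x - bJac α β ≠ 0 := fun h0 => by
  have := h.one_lt_bJac_sq
  rw [← sub_eq_zero.1 h0] at this
  nlinarith [hx.1, hx.2]

theorem ExcAdmissible.two_mul_add_ne_zero (h : ExcAdmissible α β) (n : ℕ) :
    2 * n + α + β ≠ 0 := by
  rcases n with _ | n
  · intro h0
    have hβ : β = -α := by push_cast at h0; linarith
    have := h.mul_pos
    rw [hβ] at this
    linarith [mul_self_nonneg α]
  · have := h.neg_one_lt_left
    have := h.neg_one_lt_right
    have : (0 : ℝ) ≤ n := n.cast_nonneg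
    push_cast
    linarith

/-- The exceptional Jacobi polynomial of degree `n + 1`, that is `excJacobi α β (n + 1)`. -/
noncomputable def excPoly (α β : ℝ) (n : ℕ) : ℝ[X] :=
  C (1 / (2 * n + α + β)) * (C (bJac α β) * jacobiPoly α β n - jacobiPred α β n)
    - C (1 / 2) * (jacobiPoly α β n * (X - C (bJac α β)))

theorem eval_excPoly (α β : ℝ) (n : ℕ) (x : ℝ) :
    (excPoly α β n).eval x = excJacobi α β (n + 1) x := by
  have hpred : (jacobiPred α β n).eval x = if n + 1 = 1 then 0 else jacobiP α β (n + 1 - 2) x := by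
    rcases n with _ | n
    · simp [jacobiPred]
    · simp [jacobiPred, eval_jacobiPoly]
  simp only [excPoly, excJacobi, Nat.add_sub_cancel, n.succ_ne_zero, if_false, ← hpred, eval_sub,
    eval_mul, eval_C, eval_X, eval_jacobiPoly]
  push_cast
  ring

theorem natDegree_excPoly_le (α β : ℝ) (n : ℕ) : (excPoly α β n).natDegree ≤ n + 1 := by
  have hp := natDegree_jacobiPoly_le α β n
  have hq := natDegree_jacobiPred_le α β n
  refine (natDegree_sub_le _ _).trans (max_le ?_ ?_) <;> refine (natDegree_C_mul_le _ _).trans ?_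
  · exact (natDegree_sub_le _ _).trans (max_le (((natDegree_C_mul_le _ _).trans hp).trans n.le_succ)
      (hq.trans n.le_succ))
  · exact natDegree_mul_le_of_le hp (by compute_degree : (X - C (bJac α β) : ℝ[X]).natDegree ≤ 1)

theorem coeff_excPoly (α β : ℝ) (n : ℕ) :
    (excPoly α β n).coeff (n + 1) = -(1 / 2) * (jacobiPoly α β n).coeff n := by
  have hp : (jacobiPoly α β n).coeff (n + 1) = 0 :=
    coeff_eq_zero_of_natDegree_lt (Nat.lt_succ_of_le (natDegree_jacobiPoly_le α β n))
  have hq : (jacobiPred α β n).coeff (n + 1) = 0 :=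
    coeff_eq_zero_of_natDegree_lt (Nat.lt_succ_of_le (natDegree_jacobiPred_le α β n))
  simp only [excPoly, coeff_sub, coeff_C_mul, mul_sub, coeff_mul_X, coeff_mul_C, hp, hq]
  ring

/-- The exceptional Jacobi operator multiplied by `b - X`, which clears its denominators: here
`a = (β-α)/2`, and the exceptional Jacobi operator is
`(X² - 1)∂² + 2(1 - bX)/(b - X) ((a(X - b) - 1)∂ - a)`. -/
noncomputable def excOp (a b : ℝ) : ℝ[X] →ₗ[ℝ] ℝ[X] where
  toFun p := (C b - X) * (X ^ 2 - 1) * derivative (derivative p)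
    + 2 * (1 - C b * X) * ((C a * (X - C b) - 1) * derivative p - C a * p)
  map_add' p q := by simp only [map_add]; ring
  map_smul' c p := by simp only [smul_eq_C_mul, derivative_C_mul, RingHom.id_apply]; ring

theorem excOp_apply (a b : ℝ) (p : ℝ[X]) :
    excOp a b p = (C b - X) * (X ^ 2 - 1) * derivative (derivative p)
      + 2 * (1 - C b * X) * ((C a * (X - C b) - 1) * derivative p - C a * p) := rfl

/-- The eigenvalue of the exceptional Jacobi operator on the polynomial of degree `n + 1`. -/
def excEig (α β : ℝ) (n : ℕ) : ℝ := n * (n + α + β + 1)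

theorem excOp_eq_of_contiguous {a b k : ℝ} {p q y : ℝ[X]} (hα : α = a * (b - 1))
    (hβ : β = a * (b + 1)) (hk : 2 * k + α + β ≠ 0)
    (hp : C (2 * k + α + β) * ((1 - X ^ 2) * derivative p)
      = C k * (C (α - β) - C (2 * k + α + β) * X) * p + C (2 * (k + α) * (k + β)) * q)
    (hq : C (2 * k + α + β) * ((1 - X ^ 2) * derivative q)
      = C (k + α + β) * (C (2 * k + α + β) * X + C (α - β)) * q
        - C (2 * k * (k + α + β)) * p)
    (hy : 2 * C (2 * k + α + β) * y
      = 2 * (C b * p - q) - C (2 * k + α + β) * (p * (X - C b))) :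
    excOp a b y = (C b - X) * (C (k * (k + α + β + 1)) * y) := by
  subst hα hβ
  have hX : (1 - X ^ 2 : ℝ[X]) ≠ 0 := fun h => by simpa using congrArg (eval 0) h
  have hy1 := congrArg derivative hy
  have hy2 := congrArg derivative hy1
  have hp1 := congrArg derivative hp
  have hq1 := congrArg derivative hq
  refine mul_left_cancel₀ (mul_ne_zero (mul_ne_zero two_ne_zero
    (pow_ne_zero 3 (C_ne_zero.2 hk))) hX) ?_
  simp only [derivative_mul, derivative_sub, derivative_add, derivative_X, derivative_C,
    derivative_ofNat, derivative_zero, derivative_one, derivative_X_sq] at hy1 hy2 hp1 hq1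
  simp only [excOp_apply, C_add, C_sub, C_mul, map_ofNat, C_1]
    at hp hq hy hp1 hq1 hy1 hy2 ⊢
  generalize C a = a at *
  generalize C b = b at *
  generalize C k = k at *
  generalize (X : ℝ[X]) = x at *
  generalize derivative p = p' at *
  generalize derivative q = q' at *
  generalize derivative y = y' at *
  generalize derivative p' = p'' at *
  generalize derivative q' = q'' at *
  generalize derivative y' = y'' at *
  set s := 2 * k + a * (b - 1) + a * (b + 1)
  set M := 2 * b - s * (x - b)
  set W := 2 * (1 - b * x) * (a * (x - b) - 1)
  linear_combination (norm := (simp only [s, M, W]; ring))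
    s ^ 2 * (1 - x ^ 2) * ((b - x) * (x ^ 2 - 1) * hy2 + W * hy1
      + (-2 * a * (1 - b * x) - (b - x) * k * (k + 2 * a * b + 1)) * hy)
    + s * (b - x) * (1 - x ^ 2) * (2 * hq1 - M * hp1)
    + ((b - x) * M * (k * (2 * a + s * x) - 2 * s * x) - 4 * (b - x) * k
        * (k + 2 * a * b) + 2 * s ^ 2 * (1 - x ^ 2) * (b - x) + s * W * M) * hp
    + (-2 * (b - x) * M * (k + a * (b - 1)) * (k + a * (b + 1))
        + 2 * (b - x) * (2 * s * x + (k + 2 * a * b) * (s * x - 2 * a)) - 2 * s * W) * hq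

theorem excOp_excPoly (h : ExcAdmissible α β) (n : ℕ) :
    excOp ((β - α) / 2) (bJac α β) (excPoly α β n)
      = (C (bJac α β) - X) * (C (excEig α β n) * excPoly α β n) := by
  refine excOp_eq_of_contiguous h.left_eq h.right_eq (h.two_mul_add_ne_zero n)
    (jacobiPoly_lowering n) (jacobiPred_raising h.neg_one_lt_left h.neg_one_lt_right n) ?_
  have hinv : C (2 * n + α + β) * C (1 / (2 * n + α + β)) = 1 := by
    rw [← C_mul, mul_one_div_cancel (h.two_mul_add_ne_zero n), C_1]
  rw [excPoly]
  linear_combination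
    2 * (C (bJac α β) * jacobiPoly α β n - jacobiPred α β n) * hinv
      - C (2 * n + α + β) * (jacobiPoly α β n * (X - C (bJac α β))) * C_half_mul_two

end

/-! ### Integration against the exceptional weight -/

section

variable {α β : ℝ}

/-- The exceptional Jacobi weight `(1-x)^α (1+x)^β / (x-b)²` on `[-1, 1]`. -/
noncomputable def excWeight (α β x : ℝ) : ℝ :=
  (1 - x) ^ α * (1 + x) ^ β / (x - bJac α β) ^ 2

/-- The coefficient of the Wronskian in the Lagrange identity of the exceptional Jacobi operator:
`(1 - x²)` times `excWeight α β x`, written so as to be continuous up to the end points. -/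
noncomputable def excConcomitant (α β x : ℝ) : ℝ :=
  (1 - x) ^ (α + 1) * (1 + x) ^ (β + 1) / (x - bJac α β) ^ 2

theorem excConcomitant_neg_one (hβ : -1 < β) : excConcomitant α β (-1) = 0 := by
  simp [excConcomitant, zero_rpow (by linarith : β + 1 ≠ 0)]

theorem excConcomitant_one (hα : -1 < α) : excConcomitant α β 1 = 0 := by
  simp [excConcomitant, zero_rpow (by linarith : α + 1 ≠ 0)]

theorem intervalIntegrable_rpow_mul_rpow (hα : -1 < α) (hβ : -1 < β) :
    IntervalIntegrable (fun x : ℝ => (1 - x) ^ α * (1 + x) ^ β) volume (-1) 1 := by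
  have hleft : IntervalIntegrable (fun x : ℝ => (1 + x) ^ β) volume (-1) 0 := by
    simpa using
      (intervalIntegral.intervalIntegrable_rpow' (a := 0) (b := 1) hβ).comp_add_left 1
  have hright : IntervalIntegrable (fun x : ℝ => (1 - x) ^ α) volume 0 1 := by
    simpa using
      (intervalIntegral.intervalIntegrable_rpow' (a := 1) (b := 0) hα).comp_sub_left 1
  refine (hleft.continuousOn_mul ?_).trans (hright.mul_continuousOn ?_)
  all_goals
    refine ContinuousOn.rpow_const (by fun_prop) fun x hx => Or.inl ?_
    rw [Set.uIcc_of_le (by norm_num)] at hx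
    linarith [hx.1, hx.2]

theorem ExcAdmissible.continuousOn_inv_sub_sq (h : ExcAdmissible α β) :
    ContinuousOn (fun x => ((x - bJac α β) ^ 2)⁻¹) (Set.Icc (-1) 1) :=
  ContinuousOn.inv₀ (by fun_prop) fun _ hx => pow_ne_zero 2 (h.sub_bJac_ne_zero hx)

theorem ExcAdmissible.intervalIntegrable_mul_excWeight (h : ExcAdmissible α β) (p : ℝ[X])
    (τ : Set.Icc (-1 : ℝ) 1) :
    IntervalIntegrable (fun x => p.eval x * excWeight α β x) volume (-1) τ := by
  have huIcc : Set.uIcc (-1 : ℝ) 1 = Set.Icc (-1) 1 := Set.uIcc_of_le (by norm_num)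
  have hint : IntervalIntegrable (excWeight α β) volume (-1) 1 :=
    (intervalIntegrable_rpow_mul_rpow h.neg_one_lt_left h.neg_one_lt_right).mul_continuousOn
      (huIcc ▸ h.continuousOn_inv_sub_sq)
  refine (hint.continuousOn_mul p.continuous.continuousOn).mono_set ?_
  rw [Set.uIcc_of_le τ.2.1, huIcc]
  exact Set.Icc_subset_Icc_right τ.2.2

theorem ExcAdmissible.continuousOn_excConcomitant (h : ExcAdmissible α β) :
    ContinuousOn (excConcomitant α β) (Set.Icc (-1) 1) := by
  have hα := h.neg_one_lt_left
  have hβ := h.neg_one_lt_right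
  refine ContinuousOn.mul (ContinuousOn.mul ?_ ?_) h.continuousOn_inv_sub_sq
  all_goals exact ContinuousOn.rpow_const (by fun_prop) fun _ _ => Or.inr (by linarith)

theorem excConcomitant_eq {x : ℝ} (hx : x ∈ Set.Ioo (-1 : ℝ) 1) :
    excConcomitant α β x = (1 - x ^ 2) * excWeight α β x := by
  rw [excConcomitant, excWeight, rpow_add_one (by linarith [hx.2]),
    rpow_add_one (by linarith [hx.1])]
  ring

theorem ExcAdmissible.hasDerivAt_excConcomitant (h : ExcAdmissible α β) {x : ℝ}
    (hx : x ∈ Set.Ioo (-1 : ℝ) 1) :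
    HasDerivAt (excConcomitant α β)
      (2 * (1 - bJac α β * x) * ((β - α) / 2 * (x - bJac α β) - 1) / (x - bJac α β)
        * excWeight α β x) x := by
  have hm : 1 - x ≠ 0 := by linarith [hx.2]
  have hp : 1 + x ≠ 0 := by linarith [hx.1]
  have hb := h.sub_bJac_ne_zero (Set.Ioo_subset_Icc_self hx)
  have hid := hasDerivAt_id' x
  have hnum := ((hid.const_sub 1).rpow_const (p := α + 1) (Or.inl hm)).mul
    ((hid.const_add 1).rpow_const (p := β + 1) (Or.inl hp))
  refine (hnum.div ((hid.sub_const _).pow 2) (pow_ne_zero 2 hb)).congr_deriv ?_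
  simp only [excWeight, add_sub_cancel_right, rpow_add_one hm, rpow_add_one hp, Pi.mul_apply,
    Pi.pow_apply]
  generalize (1 - x) ^ α = u
  generalize (1 + x) ^ β = v
  have hα := h.left_eq
  have hβ := h.right_eq
  generalize bJac α β = b at *
  generalize (β - α) / 2 = a at *
  subst hα hβ
  field_simp
  ring

/-- Integration of polynomials over `[-1, τ]` against the exceptional Jacobi weight. -/
noncomputable def excInt (h : ExcAdmissible α β) (τ : Set.Icc (-1 : ℝ) 1) : ℝ[X] →ₗ[ℝ] ℝ where
  toFun p := ∫ x in (-1 : ℝ)..τ, p.eval x * excWeight α β x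
  map_add' p q := by
    rw [← intervalIntegral.integral_add (h.intervalIntegrable_mul_excWeight p τ)
      (h.intervalIntegrable_mul_excWeight q τ)]
    simp only [eval_add, add_mul]
  map_smul' c p := by
    rw [RingHom.id_apply, smul_eq_mul, ← intervalIntegral.integral_const_mul]
    simp only [eval_smul, smul_eq_mul, mul_assoc]

variable (h : ExcAdmissible α β) (τ : Set.Icc (-1 : ℝ) 1)

theorem excInt_apply (p : ℝ[X]) :
    excInt h τ p = ∫ x in (-1 : ℝ)..τ, p.eval x * excWeight α β x := rfl

theorem excInt_C_mul (c : ℝ) (p : ℝ[X]) : excInt h τ (C c * p) = c * excInt h τ p := by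
  rw [← smul_eq_C_mul, map_smul, smul_eq_mul]

/-- `F` is the image of `f` under the exceptional Jacobi operator `(b - X)⁻¹ excOp a b`, which
takes polynomials to polynomials only on a hyperplane. -/
def IsExcImage (a b : ℝ) (f F : ℝ[X]) : Prop := excOp a b f = (C b - X) * F

theorem excInt_lagrange {f F g G : ℝ[X]} (hf : IsExcImage ((β - α) / 2) (bJac α β) f F)
    (hg : IsExcImage ((β - α) / 2) (bJac α β) g G) :
    excInt h τ (F * g) - excInt h τ (f * G)
      = excConcomitant α β τ * (wronskian f g).eval (τ : ℝ) := by
  have hderiv : ∀ x ∈ Set.Ioo (-1 : ℝ) τ, HasDerivAt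
      (fun x => excConcomitant α β x * (wronskian f g).eval x)
      ((F * g - f * G).eval x * excWeight α β x) x := by
    intro x hx
    have hx1 : x ∈ Set.Ioo (-1 : ℝ) 1 := ⟨hx.1, hx.2.trans_le τ.2.2⟩
    have hb := h.sub_bJac_ne_zero (Set.Ioo_subset_Icc_self hx1)
    refine ((h.hasDerivAt_excConcomitant hx1).mul
      ((wronskian f g).hasDerivAt x)).congr_deriv ?_
    have hf' := congrArg (eval x) hf
    have hg' := congrArg (eval x) hg
    simp only [excOp_apply, wronskian, derivative_sub, derivative_mul, excConcomitant_eq hx1,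
      eval_mul, eval_sub, eval_add, eval_pow, eval_X, eval_C, eval_one, eval_ofNat] at hf' hg' ⊢
    field_simp
    linear_combination excWeight α β x * (f.eval x * hg' - g.eval x * hf')
  rw [← map_sub, excInt_apply, intervalIntegral.integral_eq_sub_of_hasDerivAt_of_le τ.2.1
    ((h.continuousOn_excConcomitant.mono (Set.Icc_subset_Icc_right τ.2.2)).mul
      (wronskian f g).continuous.continuousOn) hderiv (h.intervalIntegrable_mul_excWeight _ τ),
    Pi.mul_apply, Pi.mul_apply, excConcomitant_neg_one h.neg_one_lt_right, zero_mul, sub_zero]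

/-- The right end point of `[-1, 1]`, the interval of orthogonality. -/
def rightEnd : Set.Icc (-1 : ℝ) 1 := ⟨1, by norm_num⟩

theorem excInt_mul_self_pos {p : ℝ[X]} (hp : p ≠ 0) : 0 < excInt h rightEnd (p * p) := by
  have hweight {x : ℝ} (hx : x ∈ Set.Ioo (-1 : ℝ) 1) : 0 < excWeight α β x := by
    have hb := h.sub_bJac_ne_zero (Set.Ioo_subset_Icc_self hx)
    have hm := rpow_pos_of_pos (by linarith [hx.2] : 0 < 1 - x) α
    have hp := rpow_pos_of_pos (by linarith [hx.1] : 0 < 1 + x) β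
    rw [excWeight]
    positivity
  have hnonneg : ∀ x ∈ Set.uIoc (-1 : ℝ) rightEnd, 0 ≤ (p * p).eval x * excWeight α β x := by
    intro x hx
    rw [Set.uIoc_of_le rightEnd.2.1] at hx
    have hm := rpow_nonneg (by linarith [hx.2, show (rightEnd : ℝ) = 1 from rfl] : 0 ≤ 1 - x) α
    have hp := rpow_nonneg (by linarith [hx.1] : 0 ≤ 1 + x) β
    rw [eval_mul, excWeight]
    have := mul_self_nonneg (p.eval x)
    positivity
  rw [excInt_apply, intervalIntegral.integral_pos_iff_support_of_nonneg_ae'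
    ((ae_restrict_iff' measurableSet_uIoc).2 (.of_forall hnonneg))
    (h.intervalIntegrable_mul_excWeight _ _)]
  refine ⟨by norm_num [rightEnd], ?_⟩
  obtain ⟨c, hc, hpc⟩ : ∃ c ∈ Set.Ioo (-1 : ℝ) 1, p.eval c ≠ 0 := by
    by_contra! hcon
    exact hp (eq_zero_of_infinite_isRoot p
      ((Set.Ioo_infinite (by norm_num : (-1 : ℝ) < 1)).mono fun x hx => hcon x hx))
  have hopen : IsOpen (Set.Ioo (-1 : ℝ) 1 ∩ {x | p.eval x ≠ 0}) :=
    isOpen_Ioo.inter (p.continuous.isOpen_preimage _ isOpen_ne)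
  refine (hopen.measure_pos volume ⟨c, hc, hpc⟩).trans_le (measure_mono fun x hx => ⟨?_, ?_⟩)
  · rw [Function.mem_support, eval_mul]
    exact mul_ne_zero (mul_self_ne_zero.2 hx.2) (hweight hx.1).ne'
  · exact Set.Ioo_subset_Ioc_self hx.1

end

/-! ### The orthonormal basis -/

section

variable {α β : ℝ}

theorem exists_eq_sum_of_mem_ker {K : Type*} [Field K] {ℓ : K[X] →ₗ[K] K} (hℓ : ℓ 1 ≠ 0)
    {f : ℕ → K[X]} (hker : ∀ k, ℓ (f k) = 0) (hdeg : ∀ k, (f k).natDegree ≤ k + 1)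
    (hcoeff : ∀ k, (f k).coeff (k + 1) ≠ 0) {m : ℕ} {p : K[X]} (hp : p.natDegree ≤ m)
    (hpker : ℓ p = 0) : ∃ c : ℕ → K, p = ∑ k ∈ Finset.range m, C (c k) * f k := by
  induction m generalizing p with
  | zero =>
    rw [eq_C_of_natDegree_le_zero hp, ← mul_one (C _), ← smul_eq_C_mul, map_smul, smul_eq_mul,
      mul_eq_zero, or_iff_left hℓ] at hpker
    exact ⟨0, by rw [eq_C_of_natDegree_le_zero hp, hpker]; simp⟩
  | succ m ih =>
    set a := p.coeff (m + 1) / (f m).coeff (m + 1) with ha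
    have hdeg' : (p - C a * f m).natDegree ≤ m := by
      rw [natDegree_le_iff_coeff_eq_zero]
      intro i hi
      rw [coeff_sub, coeff_C_mul]
      rcases Nat.eq_or_lt_of_le (Nat.succ_le_of_lt hi) with rfl | hi'
      · rw [ha, Nat.succ_eq_add_one, div_mul_cancel₀ _ (hcoeff m), sub_self]
      · rw [coeff_eq_zero_of_natDegree_lt (hp.trans_lt hi'),
          coeff_eq_zero_of_natDegree_lt ((hdeg m).trans_lt hi'), mul_zero, sub_zero]
    have hker' : ℓ (p - C a * f m) = 0 := by
      rw [← smul_eq_C_mul, map_sub, map_smul, hker, hpker, smul_zero, sub_zero]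
    obtain ⟨c, hc⟩ := ih hdeg' hker'
    refine ⟨Function.update c m a, ?_⟩
    rw [Finset.sum_range_succ, Function.update_self, ← sub_eq_iff_eq_add, hc]
    refine Finset.sum_congr rfl fun k hk => ?_
    rw [Function.update_of_ne (by grind)]

/-- The functional `p ↦ p'(b) + a p(b)`, whose kernel is the space spanned by the exceptional
Jacobi polynomials. -/
noncomputable def excFunctional (a b : ℝ) : ℝ[X] →ₗ[ℝ] ℝ :=
  leval b ∘ₗ derivative + a • leval b

theorem excFunctional_apply (a b : ℝ) (p : ℝ[X]) :
    excFunctional a b p = (derivative p).eval b + a * p.eval b := rfl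

theorem excFunctional_sq_mul (a b : ℝ) (p : ℝ[X]) :
    excFunctional a b ((X - C b) ^ 2 * p) = 0 := by
  simp [excFunctional_apply, derivative_pow]

theorem IsExcImage.excFunctional_eq_zero {a b : ℝ} {f F : ℝ[X]} (hf : IsExcImage a b f F)
    (hb : b ^ 2 ≠ 1) : excFunctional a b f = 0 := by
  have h := congrArg (eval b) hf
  simp only [excOp_apply, eval_mul, eval_sub, eval_add, eval_pow, eval_X, eval_C, eval_one,
    eval_ofNat, sub_self, zero_mul, mul_zero, zero_add] at h
  have hb' : 2 * (1 - b ^ 2) ≠ 0 := mul_ne_zero two_ne_zero (sub_ne_zero.2 hb.symm)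
  rw [excFunctional_apply]
  exact (mul_eq_zero.1 (by linear_combination -h :
    2 * (1 - b ^ 2) * ((derivative f).eval b + a * f.eval b) = 0)).resolve_left hb'

theorem IsExcImage.C_mul {a b : ℝ} {f F : ℝ[X]} (hf : IsExcImage a b f F) (c : ℝ) :
    IsExcImage a b (C c * f) (C c * F) := by
  rw [IsExcImage, ← smul_eq_C_mul, map_smul, hf, smul_eq_C_mul, mul_left_comm]

theorem IsExcImage.sum {ι : Type*} {a b : ℝ} {s : Finset ι} {f F : ι → ℝ[X]}
    (hf : ∀ i ∈ s, IsExcImage a b (f i) (F i)) :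
    IsExcImage a b (∑ i ∈ s, f i) (∑ i ∈ s, F i) := by
  rw [IsExcImage, map_sum, Finset.mul_sum]
  exact Finset.sum_congr rfl hf

theorem ExcAdmissible.excEig_injective (h : ExcAdmissible α β) :
    Function.Injective (excEig α β) := by
  intro j k hjk
  by_contra hne
  have hadd : (1 : ℝ) ≤ j + k := by exact_mod_cast (by omega : 1 ≤ j + k)
  have hprod : ((j : ℝ) - k) * (j + k + α + β + 1) = 0 := by
    simp only [excEig] at hjk
    linear_combination hjk
  rcases mul_eq_zero.1 hprod with h0 | h0
  · exact hne (Nat.cast_injective (sub_eq_zero.1 h0))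
  · linarith [h.neg_one_lt_left, h.neg_one_lt_right]

theorem ExcAdmissible.coeff_excPoly_ne_zero (h : ExcAdmissible α β) (n : ℕ) :
    (excPoly α β n).coeff (n + 1) ≠ 0 := by
  rw [coeff_excPoly]
  exact mul_ne_zero (by norm_num)
    (coeff_jacobiPoly_pos h.neg_one_lt_left h.neg_one_lt_right n).ne'

variable (h : ExcAdmissible α β)

/-- The orthonormal exceptional Jacobi polynomial of degree `n + 1`. -/
noncomputable def onPoly (n : ℕ) : ℝ[X] :=
  C (1 / √(excInt h rightEnd (excPoly α β n * excPoly α β n))) * excPoly α β n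

theorem isExcImage_onPoly (n : ℕ) : IsExcImage ((β - α) / 2) (bJac α β) (onPoly h n)
    (C (excEig α β n) * onPoly h n) := by
  rw [onPoly, mul_left_comm]
  exact IsExcImage.C_mul (excOp_excPoly h n) _

theorem natDegree_onPoly_le (n : ℕ) : (onPoly h n).natDegree ≤ n + 1 :=
  (natDegree_C_mul_le _ _).trans (natDegree_excPoly_le α β n)

theorem excPoly_norm_pos (n : ℕ) : 0 < excInt h rightEnd (excPoly α β n * excPoly α β n) :=
  excInt_mul_self_pos h fun h0 => h.coeff_excPoly_ne_zero n (by rw [h0, coeff_zero])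

theorem coeff_onPoly_ne_zero (n : ℕ) : (onPoly h n).coeff (n + 1) ≠ 0 := by
  rw [onPoly, coeff_C_mul]
  have := Real.sqrt_pos.2 (excPoly_norm_pos h n)
  exact mul_ne_zero (by positivity) (h.coeff_excPoly_ne_zero n)

theorem sub_mul_excInt_of_eigen (τ : Set.Icc (-1 : ℝ) 1) {y z : ℝ[X]} {l m : ℝ}
    (hy : IsExcImage ((β - α) / 2) (bJac α β) y (C l * y))
    (hz : IsExcImage ((β - α) / 2) (bJac α β) z (C m * z)) :
    (l - m) * excInt h τ (y * z) = excConcomitant α β τ * (wronskian y z).eval (τ : ℝ) := by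
  rw [← excInt_lagrange h τ hy hz, mul_assoc, excInt_C_mul, mul_left_comm y, excInt_C_mul, sub_mul]

theorem excInt_onPoly_mul (j k : ℕ) :
    excInt h rightEnd (onPoly h j * onPoly h k) = if j = k then 1 else 0 := by
  split_ifs with hjk
  · subst hjk
    have hpos := excPoly_norm_pos h j
    have := Real.mul_self_sqrt hpos.le
    have := Real.sqrt_pos.2 hpos
    rw [onPoly, mul_assoc, excInt_C_mul, mul_left_comm, excInt_C_mul]
    field_simp
    linarith
  · have horth := sub_mul_excInt_of_eigen h rightEnd (isExcImage_onPoly h j) (isExcImage_onPoly h k)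
    rw [show ((rightEnd : Set.Icc (-1 : ℝ) 1) : ℝ) = 1 from rfl,
      excConcomitant_one h.neg_one_lt_left, zero_mul] at horth
    exact (mul_eq_zero.1 horth).resolve_left
      (sub_ne_zero.2 fun heq => hjk (h.excEig_injective heq))

theorem eq_sum_excInt_mul_onPoly {m : ℕ} {p : ℝ[X]} (hm : p.natDegree ≤ m)
    (hp : excFunctional ((β - α) / 2) (bJac α β) p = 0) :
    (∀ k, m ≤ k → excInt h rightEnd (p * onPoly h k) = 0) ∧
      p = ∑ k ∈ Finset.range m, C (excInt h rightEnd (p * onPoly h k)) * onPoly h k := by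
  have hone : excFunctional ((β - α) / 2) (bJac α β) 1 ≠ 0 := by
    simpa [excFunctional_apply, sub_eq_zero] using h.ne.symm
  obtain ⟨c, hc⟩ := exists_eq_sum_of_mem_ker hone
    (fun k => (isExcImage_onPoly h k).excFunctional_eq_zero h.one_lt_bJac_sq.ne')
    (natDegree_onPoly_le h) (coeff_onPoly_ne_zero h) hm hp
  have hcoef (k : ℕ) :
      excInt h rightEnd (p * onPoly h k) = if k ∈ Finset.range m then c k else 0 := by
    simp only [hc, Finset.sum_mul, map_sum, mul_assoc, excInt_C_mul, excInt_onPoly_mul, mul_ite,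
      mul_one, mul_zero, Finset.sum_ite_eq']
  refine ⟨fun k hk => by rw [hcoef, if_neg (by grind)], hc.trans ?_⟩
  exact Finset.sum_congr rfl fun k hk => by rw [hcoef, if_pos hk]

/-- The matrix entries of multiplication by `(x-b)²` in the orthonormal basis. -/
noncomputable def multCoef (j k : ℕ) : ℝ :=
  excInt h rightEnd ((X - C (bJac α β)) ^ 2 * onPoly h j * onPoly h k)

theorem multCoef_comm (j k : ℕ) : multCoef h j k = multCoef h k j := by
  rw [multCoef, multCoef, mul_right_comm]

theorem natDegree_sq_mul_onPoly_le (j : ℕ) :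
    ((X - C (bJac α β)) ^ 2 * onPoly h j).natDegree ≤ j + 3 := by
  have hsq : ((X - C (bJac α β)) ^ 2 : ℝ[X]).natDegree ≤ 2 := by compute_degree
  exact (natDegree_mul_le_of_le hsq (natDegree_onPoly_le h j)).trans (by omega)

theorem multCoef_eq_zero {j k : ℕ} (hjk : j + 3 ≤ k) : multCoef h j k = 0 :=
  (eq_sum_excInt_mul_onPoly h (natDegree_sq_mul_onPoly_le h j) (excFunctional_sq_mul _ _ _)).1 k hjk

theorem sq_mul_onPoly {j n : ℕ} (hn : j + 3 ≤ n) :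
    (X - C (bJac α β)) ^ 2 * onPoly h j = ∑ k ∈ Finset.range n, C (multCoef h j k) * onPoly h k :=
  (eq_sum_excInt_mul_onPoly h ((natDegree_sq_mul_onPoly_le h j).trans hn)
    (excFunctional_sq_mul _ _ _)).2

theorem multCoef_add_two_ne_zero (j : ℕ) : multCoef h j (j + 2) ≠ 0 := by
  intro h0
  have hcoeff := congrArg (coeff · (2 + (j + 1))) (sq_mul_onPoly h (le_refl (j + 3)))
  have hsq : ((X - C (bJac α β)) ^ 2 : ℝ[X]).natDegree ≤ 2 := by compute_degree
  have hlead : ((X - C (bJac α β)) ^ 2 : ℝ[X]).coeff 2 = 1 := by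
    simpa using ((monic_X_sub_C (bJac α β)).pow 2).coeff_natDegree
  simp only [Finset.sum_range_succ _ (j + 2), h0, C_0, zero_mul, add_zero, finsetSum_coeff,
    coeff_C_mul, coeff_mul_add_eq_of_natDegree_le hsq (natDegree_onPoly_le h j), hlead,
    one_mul] at hcoeff
  refine coeff_onPoly_ne_zero h j (hcoeff.trans (Finset.sum_eq_zero fun k hk => ?_))
  rw [coeff_eq_zero_of_natDegree_lt ((natDegree_onPoly_le h k).trans_lt (by grind)), mul_zero]

end

/-! ### Self-adjointness on a truncated interval -/

section

theorem IsExcImage.eq_of_eq {a b : ℝ} {f F G : ℝ[X]} (hF : IsExcImage a b f F)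
    (hG : excOp a b f = (C b - X) * G) : F = G := by
  refine mul_left_cancel₀ (fun h0 => ?_) (hF.symm.trans hG)
  simpa using congrArg derivative h0

theorem excImage_sq_mul_eigen {a b l : ℝ} {y G : ℝ[X]} (hy : IsExcImage a b y (C l * y))
    (hG : IsExcImage a b ((X - C b) ^ 2 * y) G) :
    G = C l * ((X - C b) ^ 2 * y) + 4 * (X ^ 2 - 1) * (X - C b) * derivative y
      + (2 * (X ^ 2 - 1) - 4 * (1 - C b * X) * (C a * (X - C b) - 1)) * y := by
  refine hG.eq_of_eq ?_
  rw [IsExcImage, excOp_apply] at hy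
  simp only [excOp_apply, pow_two (X - C b : ℝ[X]), derivative_mul, derivative_add, derivative_sub,
    derivative_X, derivative_C, derivative_zero, derivative_one]
  linear_combination (X - C b) ^ 2 * hy

/-- The term `q₀` of the double commutator `[E, [E, (x-b)²]] = q₁ E + (x²-1) q₁' ∂ + q₀`, where
`E` is the exceptional Jacobi operator and `q₁ = 16x² - 8bx - 8`. It is needed both at `X` and at
real points. -/
def doubleCommPotential {R : Type*} [CommRing R] (a b x : R) : R :=
  (4 + 48 * (a * b) + 16 * (a * b) ^ 2) * x ^ 2
    - 8 * (b + 4 * a + 2 * a * b ^ 2 + 3 * a ^ 2 * b + a ^ 2 * b ^ 3) * x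
    + 4 + 8 * a ^ 2 * (1 + b ^ 2)

theorem excImage_excImage_sq_mul_eigen {a b l : ℝ} {y G H : ℝ[X]}
    (hy : IsExcImage a b y (C l * y)) (hG : IsExcImage a b ((X - C b) ^ 2 * y) G)
    (hH : IsExcImage a b G H) :
    H = C l * G + C l * (4 * (X ^ 2 - 1) * (X - C b) * derivative y
        + (2 * (X ^ 2 - 1) - 4 * (1 - C b * X) * (C a * (X - C b) - 1)) * y)
      + (X ^ 2 - 1) * (32 * X - 8 * C b) * derivative y
      + (C l * (16 * X ^ 2 - 8 * C b * X - 8) + doubleCommPotential (C a) (C b) X) * y := by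
  refine hH.eq_of_eq ?_
  rw [excImage_sq_mul_eigen hy hG, doubleCommPotential]
  rw [IsExcImage, excOp_apply] at hy
  have hy1 := congrArg derivative hy
  simp only [excOp_apply, pow_two (X - C b : ℝ[X]), derivative_mul, derivative_add, derivative_sub,
    derivative_X, derivative_C, derivative_zero, derivative_one, derivative_X_sq,
    derivative_ofNat, map_ofNat] at hy1 ⊢
  linear_combination 4 * (X ^ 2 - 1) * (X - C b) * hy1
    + (C l * (X - C b) ^ 2 + 8 * X * (X - C b) + 4 * (X ^ 2 - 1) + (2 * (X ^ 2 - 1)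
      - 4 * (1 - C b * X) * (C a * (X - C b) - 1))) * hy

/-- The coefficients of a noncommutative polynomial of the shape considered by Perline, see
`PerlineCoeffs.eval`. -/
structure PerlineCoeffs where
  (γ₁ γ₂ γ₃ γ₄ γ₅ γ₆ γ₇ γ₈ : ℝ)

namespace PerlineCoeffs

/-- The word with coefficients `γ` in an eigenvalue operator `L` and a multiplication operator
`B`. -/
def eval {A : Type*} [Ring A] [Module ℝ A] (γ : PerlineCoeffs) (L B : A) : A :=
  γ.γ₁ • (1 : A) + γ.γ₂ • L + γ.γ₃ • B + γ.γ₄ • L ^ 2 + γ.γ₅ • (L * B + B * L)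
    + γ.γ₆ • (B * L ^ 2 + L ^ 2 * B) + γ.γ₇ • (L * B * L)
    + γ.γ₈ • ((L ^ 3 * B + B * L ^ 3) - (L * B * L ^ 2 + L ^ 2 * B * L))

/-- The conditions under which the differential operator `γ.eval E (x-b)²`, where `E` is the
exceptional Jacobi operator, is formally self-adjoint on `[-1, τ]`: modulo multiplication operators
it equals `E a₄ E + E χ + χ E`, and `a₄` has to vanish to second order and `χ` to first order at
`τ`. The last condition is multiplied by `b - τ` to clear denominators. -/
structure IsSelfAdjointAt (γ : PerlineCoeffs) (a b τ : ℝ) : Prop where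
  symbol_eq_zero :
    γ.γ₄ + (2 * γ.γ₆ + γ.γ₇) * (τ - b) ^ 2 + 2 * γ.γ₈ * (16 * τ ^ 2 - 8 * b * τ - 8) = 0
  deriv_symbol_eq_zero : 2 * (2 * γ.γ₆ + γ.γ₇) * (τ - b) + 2 * γ.γ₈ * (32 * τ - 8 * b) = 0
  second_symbol_eq_zero :
    (b - τ) * (γ.γ₂ + 2 * γ.γ₅ * (τ - b) ^ 2 + γ.γ₆ * (16 * τ ^ 2 - 8 * b * τ - 8)
      + γ.γ₈ * (96 * τ ^ 2 - 16 * b * τ - 32 + 2 * doubleCommPotential a b τ))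
      = γ.γ₈ * (2 * (1 - b * τ) * (a * (τ - b) - 1)) * (32 * τ - 8 * b)

/-- The bilinear concomitant of the word `γ.eval E φ`, where `G r` stands for `E ^ r (φ y)` and
`y`, `z` are eigenfunctions of `E` for the eigenvalues `l`, `m`. -/
noncomputable def concomitant (γ : PerlineCoeffs) (l m : ℝ) (G : ℕ → ℝ[X]) (z : ℝ[X]) : ℝ[X] :=
  C (γ.γ₅ + γ.γ₇ * l + γ.γ₆ * m + γ.γ₈ * (m ^ 2 - l ^ 2 - l * m)) * wronskian (G 0) z
    + C (γ.γ₆ + γ.γ₈ * (m - l)) * wronskian (G 1) z + C γ.γ₈ * wronskian (G 2) z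

theorem IsSelfAdjointAt.concomitant_symm {γ : PerlineCoeffs} {a b τ l m : ℝ}
    (hγ : γ.IsSelfAdjointAt a b τ) (hτ : τ ≠ b) {y z : ℝ[X]} {G H : ℕ → ℝ[X]}
    (hy : IsExcImage a b y (C l * y)) (hz : IsExcImage a b z (C m * z))
    (hG₀ : G 0 = (X - C b) ^ 2 * y) (hH₀ : H 0 = (X - C b) ^ 2 * z)
    (hG : ∀ r, IsExcImage a b (G r) (G (r + 1))) (hH : ∀ r, IsExcImage a b (H r) (H (r + 1))) :
    (γ.γ₂ + γ.γ₄ * (l + m)) * (wronskian y z).eval τ + (γ.concomitant l m G z).eval τ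
      = (γ.concomitant m l H y).eval τ := by
  have hG₁ := excImage_sq_mul_eigen hy (hG₀ ▸ hG 0)
  have hH₁ := excImage_sq_mul_eigen hz (hH₀ ▸ hH 0)
  have hG₂ := excImage_excImage_sq_mul_eigen hy (hG₀ ▸ hG 0) (hG 1)
  have hH₂ := excImage_excImage_sq_mul_eigen hz (hH₀ ▸ hH 0) (hH 1)
  have hyτ := congrArg (Polynomial.eval τ) hy
  have hzτ := congrArg (Polynomial.eval τ) hz
  obtain ⟨h₁, h₂, h₃⟩ := hγ
  simp only [doubleCommPotential] at hG₂ hH₂ h₃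
  refine mul_left_cancel₀ (sub_ne_zero.2 hτ.symm) ?_
  simp only [zero_add, Nat.reduceAdd] at hG₁ hH₁ hG₂ hH₂
  simp only [concomitant, wronskian, hG₀, hH₀, hG₂, hH₂, hG₁, hH₁, excOp_apply,
    pow_two (X - C b : ℝ[X]), derivative_mul, derivative_add, derivative_sub, derivative_X,
    derivative_C, derivative_one, derivative_X_sq, derivative_ofNat, eval_add,
    eval_sub, eval_mul, eval_pow, eval_X, eval_C, eval_one, eval_ofNat, eval_zero] at hyτ hzτ ⊢
  generalize Polynomial.eval τ (derivative (derivative y)) = y₂ at *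
  generalize Polynomial.eval τ (derivative (derivative z)) = z₂ at *
  generalize Polynomial.eval τ (derivative y) = y₁ at *
  generalize Polynomial.eval τ (derivative z) = z₁ at *
  generalize Polynomial.eval τ y = y₀ at *
  generalize Polynomial.eval τ z = z₀ at *
  linear_combination (y₀ * z₁ - y₁ * z₀) * h₃
    + (b - τ) * (l + m) * (y₀ * z₁ - y₁ * z₀) * h₁ - (b - τ) * (l - m) * (y₀ * z₀) * h₂
    - z₀ * (4 * (τ - b) * (γ.γ₆ + γ.γ₈ * (m + l)) + γ.γ₈ * (32 * τ - 8 * b)) * hyτ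
    + y₀ * (4 * (τ - b) * (γ.γ₆ + γ.γ₈ * (m + l)) + γ.γ₈ * (32 * τ - 8 * b)) * hzτ

end PerlineCoeffs

end

/-! ### The matrices of the band-and-time-limiting problem -/

section

variable {α β : ℝ}
variable (h : ExcAdmissible α β)

namespace PerlineCoeffs

/-- The image of an eigenfunction `y` of `E` for the eigenvalue `l` under the word `γ.eval E φ`,
where `G r` stands for `E ^ r (φ y)`. -/
noncomputable def image (γ : PerlineCoeffs) (l : ℝ) (y : ℝ[X]) (G : ℕ → ℝ[X]) : ℝ[X] :=
  C (γ.γ₁ + γ.γ₂ * l + γ.γ₄ * l ^ 2) * y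
    + C (γ.γ₃ + γ.γ₅ * l + γ.γ₆ * l ^ 2 + γ.γ₈ * l ^ 3) * G 0
    + C (γ.γ₅ + γ.γ₇ * l - γ.γ₈ * l ^ 2) * G 1 + C (γ.γ₆ - γ.γ₈ * l) * G 2 + C γ.γ₈ * G 3

/-- The factor by which the word `γ.eval Λ B` with `Λ` diagonal multiplies an entry of `B`, in terms
of the eigenvalues `l`, `m` attached to its row and column. -/
def bandFactor (γ : PerlineCoeffs) (l m : ℝ) : ℝ :=
  γ.γ₃ + γ.γ₅ * (l + m) + γ.γ₆ * (l ^ 2 + m ^ 2) + γ.γ₇ * (l * m) + γ.γ₈ * ((l - m) ^ 2 * (l + m))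

theorem bandFactor_comm (γ : PerlineCoeffs) (l m : ℝ) : γ.bandFactor l m = γ.bandFactor m l := by
  simp only [bandFactor]
  ring

theorem excInt_image_mul (γ : PerlineCoeffs) (τ : Set.Icc (-1 : ℝ) 1) {l m : ℝ} {y z : ℝ[X]}
    {G : ℕ → ℝ[X]} (hz : IsExcImage ((β - α) / 2) (bJac α β) z (C m * z))
    (hG : ∀ r, IsExcImage ((β - α) / 2) (bJac α β) (G r) (G (r + 1))) :
    excInt h τ (γ.image l y G * z) =
      (γ.γ₁ + γ.γ₂ * l + γ.γ₄ * l ^ 2) * excInt h τ (y * z)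
        + γ.bandFactor l m * excInt h τ (G 0 * z)
        + excConcomitant α β τ * (γ.concomitant l m G z).eval (τ : ℝ) := by
  have hstep (r : ℕ) : excInt h τ (G (r + 1) * z) =
      m * excInt h τ (G r * z) + excConcomitant α β τ * (wronskian (G r) z).eval (τ : ℝ) := by
    rw [← excInt_lagrange h τ (hG r) hz, mul_left_comm, excInt_C_mul, add_sub_cancel]
  simp only [image, add_mul, mul_assoc, map_add, excInt_C_mul, hstep 0, hstep 1, hstep 2,
    bandFactor, concomitant, eval_add, eval_mul, eval_C]
  ring

theorem IsSelfAdjointAt.excInt_image_symm {γ : PerlineCoeffs} {τ : Set.Icc (-1 : ℝ) 1}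
    (hγ : γ.IsSelfAdjointAt ((β - α) / 2) (bJac α β) τ) {l m : ℝ} {y z : ℝ[X]} {G H : ℕ → ℝ[X]}
    (hy : IsExcImage ((β - α) / 2) (bJac α β) y (C l * y))
    (hz : IsExcImage ((β - α) / 2) (bJac α β) z (C m * z))
    (hG₀ : G 0 = (X - C (bJac α β)) ^ 2 * y) (hH₀ : H 0 = (X - C (bJac α β)) ^ 2 * z)
    (hG : ∀ r, IsExcImage ((β - α) / 2) (bJac α β) (G r) (G (r + 1)))
    (hH : ∀ r, IsExcImage ((β - α) / 2) (bJac α β) (H r) (H (r + 1))) :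
    excInt h τ (γ.image l y G * z) = excInt h τ (γ.image m z H * y) := by
  have hconc := hγ.concomitant_symm (sub_ne_zero.1 (h.sub_bJac_ne_zero τ.2)) hy hz hG₀ hH₀ hG hH
  have heig := sub_mul_excInt_of_eigen h τ hy hz
  rw [excInt_image_mul h γ τ hz hG, excInt_image_mul h γ τ hy hH, γ.bandFactor_comm m, hG₀, hH₀,
    mul_right_comm _ z, mul_comm z]
  linear_combination (γ.γ₂ + γ.γ₄ * (l + m)) * heig + excConcomitant α β τ * hconc

end PerlineCoeffs

/-- The expansion, in the orthonormal basis, of `E ^ r ((x-b)² y)` with `y` the `j`-th element of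
that basis; it is exact for `n ≥ j + 3`. -/
noncomputable def multIter (n j r : ℕ) : ℝ[X] :=
  ∑ k ∈ Finset.range n, C (multCoef h j k * excEig α β k ^ r) * onPoly h k

theorem multIter_zero {n j : ℕ} (hn : j + 3 ≤ n) :
    multIter h n j 0 = (X - C (bJac α β)) ^ 2 * onPoly h j := by
  simp only [sq_mul_onPoly h hn, multIter, pow_zero, mul_one]

theorem isExcImage_multIter (n j r : ℕ) :
    IsExcImage ((β - α) / 2) (bJac α β) (multIter h n j r) (multIter h n j (r + 1)) := by
  refine IsExcImage.sum fun k _ => ?_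
  rw [pow_succ, ← mul_assoc (multCoef h j k), C_mul (b := excEig α β k), mul_assoc (C _)]
  exact (isExcImage_onPoly h k).C_mul _

/-- The matrix of the exceptional Jacobi operator in the first `N` elements of the orthonormal
basis. -/
noncomputable def eigMatrix (α β : ℝ) (N : ℕ) : Matrix (Fin N) (Fin N) ℝ :=
  Matrix.diagonal fun k => excEig α β k

/-- The compression of multiplication by `(x-b)²` to the first `N` elements of the orthonormal
basis. -/
noncomputable def multMatrix (N : ℕ) : Matrix (Fin N) (Fin N) ℝ :=
  .of fun j k => multCoef h j k

/-- The Gram matrix, on the truncated interval `[-1, τ]`, of the first `N` elements of the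
orthonormal basis. -/
noncomputable def truncGram (τ : Set.Icc (-1 : ℝ) 1) (N : ℕ) : Matrix (Fin N) (Fin N) ℝ :=
  .of fun j k => excInt h τ (onPoly h j * onPoly h k)

theorem truncGram_isSymm (τ : Set.Icc (-1 : ℝ) 1) (N : ℕ) : (truncGram h τ N).IsSymm :=
  Matrix.IsSymm.ext fun j k => by simp only [truncGram, Matrix.of_apply, mul_comm]

namespace PerlineCoeffs

/-- The word `γ.eval Λ B` in the two matrices of the band-and-time-limiting problem. -/
noncomputable def matrix (γ : PerlineCoeffs) (N : ℕ) : Matrix (Fin N) (Fin N) ℝ :=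
  γ.eval (eigMatrix α β N) (multMatrix h N)

variable {h}

theorem matrix_apply (γ : PerlineCoeffs) {N : ℕ} (j k : Fin N) :
    γ.matrix h N j k =
      (if j = k then γ.γ₁ + γ.γ₂ * excEig α β j + γ.γ₄ * excEig α β j ^ 2 else 0)
        + γ.bandFactor (excEig α β j) (excEig α β k) * multCoef h j k := by
  simp only [matrix, eval, eigMatrix, multMatrix, Matrix.diagonal_pow, Matrix.add_apply,
    Matrix.sub_apply, Matrix.smul_apply, Matrix.diagonal_mul, Matrix.mul_diagonal,
    Matrix.diagonal_apply, Matrix.one_apply, Matrix.of_apply, Pi.pow_apply, smul_eq_mul, bandFactor]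
  split_ifs <;> ring

theorem matrix_isSymm (γ : PerlineCoeffs) (N : ℕ) : (γ.matrix h N).IsSymm := by
  refine Matrix.IsSymm.ext fun j k => ?_
  rw [matrix_apply, matrix_apply, multCoef_comm, bandFactor_comm]
  by_cases hjk : j = k
  · rw [hjk]
  · rw [if_neg hjk, if_neg (Ne.symm hjk)]

theorem matrix_ne_smul_one {γ : PerlineCoeffs} {N : ℕ} (hN : 3 ≤ N)
    (hγ : γ.bandFactor (excEig α β 0) (excEig α β 2) ≠ 0) (c : ℝ) : γ.matrix h N ≠ c • 1 := by
  intro hc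
  have hentry := congrFun (congrFun hc ⟨0, by omega⟩) ⟨2, by omega⟩
  rw [matrix_apply] at hentry
  simp [hγ, multCoef_add_two_ne_zero h 0] at hentry

/-- The word with coefficients `γ` leaves the span of the first `N` exceptional Jacobi polynomials
invariant: its factors vanish on the entries of the band that couple this span to its
complement. -/
def LeavesInvariant (γ : PerlineCoeffs) (α β : ℝ) (N : ℕ) : Prop :=
  ∀ j k, j < N → N ≤ k → k ≤ j + 2 → γ.bandFactor (excEig α β j) (excEig α β k) = 0

theorem LeavesInvariant.sum_matrix_mul_onPoly {γ : PerlineCoeffs} {N : ℕ}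
    (hγ : γ.LeavesInvariant α β N) (j : Fin N) :
    ∑ k : Fin N, C (γ.matrix h N j k) * onPoly h k =
      γ.image (excEig α β j) (onPoly h j) (multIter h (N + 2) j) := by
  have hband : ∑ k : Fin N,
      C (γ.bandFactor (excEig α β j) (excEig α β k) * multCoef h j k) * onPoly h k =
        ∑ k ∈ Finset.range (N + 2),
          C (γ.bandFactor (excEig α β j) (excEig α β k) * multCoef h j k) * onPoly h k := by
    rw [Fin.sum_univ_eq_sum_range
      (fun k => C (γ.bandFactor (excEig α β j) (excEig α β k) * multCoef h j k) * onPoly h k)]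
    refine Finset.sum_subset (Finset.range_mono (by omega)) fun k _ hk => ?_
    rw [Finset.mem_range, not_lt] at hk
    rcases le_or_gt k ((j : ℕ) + 2) with hle | hlt
    · rw [hγ j k j.2 hk hle, zero_mul, C_0, zero_mul]
    · rw [multCoef_eq_zero h hlt, mul_zero, C_0, zero_mul]
  simp only [matrix_apply, C_add, add_mul, Finset.sum_add_distrib]
  rw [hband, Finset.sum_eq_single j (by simp +contextual [eq_comm]) (by simp), if_pos rfl, image]
  simp only [add_assoc, C_add, add_mul]
  congr 3
  simp only [multIter, Finset.mul_sum, ← Finset.sum_add_distrib]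
  refine Finset.sum_congr rfl fun k _ => ?_
  simp only [bandFactor, C_add, C_sub, C_mul, C_pow, pow_zero, pow_one, C_1]
  ring

theorem matrix_mul_truncGram_apply {γ : PerlineCoeffs} {N : ℕ} (hγ : γ.LeavesInvariant α β N)
    (τ : Set.Icc (-1 : ℝ) 1) (j i : Fin N) :
    (γ.matrix h N * truncGram h τ N) j i = excInt h τ
      (γ.image (excEig α β j) (onPoly h j) (multIter h (N + 2) j) * onPoly h i) := by
  simp only [← hγ.sum_matrix_mul_onPoly, Finset.sum_mul, map_sum, Matrix.mul_apply, mul_assoc,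
    excInt_C_mul, truncGram, Matrix.of_apply]

theorem IsSelfAdjointAt.commute_truncGram {γ : PerlineCoeffs} {τ : Set.Icc (-1 : ℝ) 1} {N : ℕ}
    (hsa : γ.IsSelfAdjointAt ((β - α) / 2) (bJac α β) τ) (hinv : γ.LeavesInvariant α β N) :
    Commute (γ.matrix h N) (truncGram h τ N) := by
  have hsymm : (γ.matrix h N * truncGram h τ N).IsSymm := by
    refine Matrix.IsSymm.ext fun j i => ?_
    rw [matrix_mul_truncGram_apply hinv, matrix_mul_truncGram_apply hinv]
    exact hsa.excInt_image_symm h (isExcImage_onPoly h i) (isExcImage_onPoly h j)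
      (multIter_zero h (by omega)) (multIter_zero h (by omega)) (isExcImage_multIter h _ _)
      (isExcImage_multIter h _ _)
  rw [Commute, SemiconjBy, ← hsymm.eq, Matrix.transpose_mul, (truncGram_isSymm h τ N).eq,
    (γ.matrix_isSymm N).eq]

end PerlineCoeffs

end

/-! ### Choice of the coefficients -/

section

variable {α β : ℝ}

theorem excEig_eq_sq_sub_sq (α β : ℝ) (n : ℕ) :
    excEig α β n = (n + (α + β + 1) / 2) ^ 2 - ((α + β + 1) / 2) ^ 2 := by
  rw [excEig]
  ring

namespace PerlineCoeffs

theorem exists_isSelfAdjointAt (a : ℝ) {b τ : ℝ} (hτ : τ ≠ b) (γ₃ γ₅ γ₆ : ℝ) :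
    ∃ γ : PerlineCoeffs, γ.IsSelfAdjointAt a b τ ∧
      γ.γ₃ = γ₃ ∧ γ.γ₅ = γ₅ ∧ γ.γ₆ = γ₆ ∧ γ.γ₇ = 8 * b - 32 * τ - 2 * γ₆ ∧ γ.γ₈ = τ - b := by
  obtain ⟨γ₂, hγ₂⟩ : ∃ γ₂, (b - τ) * γ₂ =
      (τ - b) * (2 * (1 - b * τ) * (a * (τ - b) - 1)) * (32 * τ - 8 * b)
        - (b - τ) * (2 * γ₅ * (τ - b) ^ 2 + γ₆ * (16 * τ ^ 2 - 8 * b * τ - 8)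
          + (τ - b) * (96 * τ ^ 2 - 16 * b * τ - 32 + 2 * doubleCommPotential a b τ)) :=
    ⟨_, mul_div_cancel₀ _ (sub_ne_zero.2 hτ.symm)⟩
  refine ⟨⟨0, γ₂, γ₃, -((8 * b - 32 * τ) * (τ - b) ^ 2
    + 2 * (τ - b) * (16 * τ ^ 2 - 8 * b * τ - 8)), γ₅, γ₆, 8 * b - 32 * τ - 2 * γ₆, τ - b⟩,
    ⟨?_, ?_, ?_⟩, rfl, rfl, rfl, rfl, rfl⟩
  · ring
  · ring
  · linear_combination hγ₂

/-- Self-adjointness leaves `γ₃`, `γ₅`, `γ₆` free. They prescribe the two lower coefficients of the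
quadratic polynomial in `u²` to which the factor two steps off the diagonal reduces, and then
annihilate one factor next to the diagonal. -/
theorem exists_isSelfAdjointAt_bandFactor (a : ℝ) {b τ : ℝ} (hτ : τ ≠ b) (σ : ℝ) {t : ℝ}
    (ht : (t + 1 / 2) ^ 2 ≠ 1) :
    ∃ γ : PerlineCoeffs, γ.IsSelfAdjointAt a b τ ∧
      (∀ u, γ.bandFactor ((u - 1) ^ 2 - σ ^ 2) ((u + 1) ^ 2 - σ ^ 2) =
        -24 * b * (u ^ 2 - t ^ 2) * (u ^ 2 - (t + 1) ^ 2)) ∧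
      γ.bandFactor (t ^ 2 - σ ^ 2) ((t + 1) ^ 2 - σ ^ 2) = 0 := by
  set s := 8 * b - 32 * τ with hs
  set K := 2 - 2 * σ ^ 2 with hK
  set r := 24 * b * (t ^ 2 + (t + 1) ^ 2) - s * K - 16 * (τ - b) * K with hr
  set v := t + 1 / 2
  have hdet : 12 * (v ^ 2 - 1) ≠ 0 := mul_ne_zero (by norm_num) (sub_ne_zero.2 ht)
  obtain ⟨d, hd⟩ : ∃ d, 12 * (v ^ 2 - 1) * d =
      -24 * b * t ^ 2 * (t + 1) ^ 2 - s * K ^ 2 / 4 + r / 2 * (2 * v ^ 2 - 3 / 2)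
        + s / 4 * (2 * v ^ 2 + K - 3 / 2) ^ 2
        + 4 * (τ - b) * v ^ 2 * (2 * v ^ 2 + K - 3 / 2) := ⟨_, mul_div_cancel₀ _ hdet⟩
  obtain ⟨γ, hγ, h₃, h₅, h₆, h₇, h₈⟩ := exists_isSelfAdjointAt a hτ
    (-24 * b * t ^ 2 * (t + 1) ^ 2 - (r / 2 - 8 * d) * K - s * K ^ 2 / 4) (r / 2 - 8 * d)
    (d + s / 4)
  refine ⟨γ, hγ, fun u => ?_, ?_⟩
  · rw [bandFactor, h₃, h₅, h₆, h₇, h₈, hr, hK, hs]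
    ring
  · rw [bandFactor, h₃, h₅, h₆, h₇, h₈]
    linear_combination -hd

theorem exists_isSelfAdjointAt_leavesInvariant (h : ExcAdmissible α β) (τ : Set.Icc (-1 : ℝ) 1)
    {N : ℕ} (hN : 3 ≤ N) :
    ∃ γ : PerlineCoeffs, γ.IsSelfAdjointAt ((β - α) / 2) (bJac α β) τ ∧ γ.LeavesInvariant α β N ∧
      γ.bandFactor (excEig α β 0) (excEig α β 2) ≠ 0 := by
  obtain ⟨n, rfl⟩ : ∃ n, N = n + 2 := ⟨N - 2, by omega⟩
  have hn : (1 : ℝ) ≤ n := by exact_mod_cast (by omega : 1 ≤ n)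
  have hα := h.neg_one_lt_left
  have hβ := h.neg_one_lt_right
  have hb : bJac α β ≠ 0 := fun h0 => by
    have := h.one_lt_bJac_sq
    norm_num [h0] at this
  set σ := (α + β + 1) / 2 with hσ
  set t := n + 1 + σ with ht
  obtain ⟨γ, hγ, heven, hodd⟩ := exists_isSelfAdjointAt_bandFactor ((β - α) / 2)
    (sub_ne_zero.1 (h.sub_bJac_ne_zero τ.2)) σ (by nlinarith : (t + 1 / 2) ^ 2 ≠ 1)
  have heven' (k : ℕ) : γ.bandFactor (excEig α β k) (excEig α β (k + 2)) = -24 * bJac α β *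
      ((k + 1 + σ) ^ 2 - t ^ 2) * ((k + 1 + σ) ^ 2 - (t + 1) ^ 2) := by
    rw [← heven, excEig_eq_sq_sub_sq, excEig_eq_sq_sub_sq]
    push_cast
    congr 1 <;> ring
  refine ⟨γ, hγ, fun j k hj hk hkj => ?_, ?_⟩
  · obtain ⟨rfl, rfl⟩ | ⟨rfl, rfl⟩ | ⟨rfl, rfl⟩ : (j = n ∧ k = n + 2) ∨
      (j = n + 1 ∧ k = n + 2) ∨ (j = n + 1 ∧ k = n + 1 + 2) := by omega
    · rw [heven', ht]
      ring
    · rw [← hodd, excEig_eq_sq_sub_sq, excEig_eq_sq_sub_sq]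
      push_cast
      congr 1
      ring
    · rw [heven', ht]
      push_cast
      ring
  · rw [← zero_add 2, heven']
    refine mul_ne_zero (mul_ne_zero (mul_ne_zero (by norm_num) hb) ?_) ?_ <;>
    · push_cast
      nlinarith

end PerlineCoeffs

theorem jacobi_perline_general_general (h : ExcAdmissible α β) (τ : Set.Icc (-1 : ℝ) 1)
    {N : ℕ} (hN : 3 ≤ N) :
    ∃ γ : PerlineCoeffs, (∀ c : ℝ, γ.eval (eigMatrix α β N) (multMatrix h N) ≠ c • 1) ∧
      Commute (γ.eval (eigMatrix α β N) (multMatrix h N)) (truncGram h τ N) := by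
  obtain ⟨γ, hsa, hinv, hne⟩ := PerlineCoeffs.exists_isSelfAdjointAt_leavesInvariant h τ hN
  exact ⟨γ, γ.matrix_ne_smul_one hN hne, hsa.commute_truncGram hinv⟩

theorem bJac_three_four : bJac 3 4 = 7 := by
  norm_num [bJac]

theorem excWeight_three_four (x : ℝ) :
    excWeight 3 4 x = (1 - x) ^ 3 * (1 + x) ^ 4 / (x - 7) ^ 2 := by
  rw [excWeight, bJac_three_four, rpow_ofNat, rpow_ofNat]

theorem excAdmissible_three_four : ExcAdmissible 3 4 := by
  constructor <;> norm_num

theorem eval_onPoly_three_four (n : ℕ) (x : ℝ) :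
    (onPoly excAdmissible_three_four n).eval x = pTil (n + 1) x := by
  have hnorm : excInt excAdmissible_three_four rightEnd (excPoly 3 4 n * excPoly 3 4 n)
      = normSqJ (n + 1) := by
    refine intervalIntegral.integral_congr fun x _ => ?_
    simp only [eval_mul, eval_excPoly, excWeight_three_four]
    ring
  rw [onPoly, eval_mul, eval_C, eval_excPoly, hnorm, pTil, one_div_mul_eq_div]

theorem MMat_eq_truncGram (N : ℕ) :
    MMat N = truncGram excAdmissible_three_four ⟨1 / 3, by norm_num⟩ N := by
  ext j k
  refine intervalIntegral.integral_congr fun x _ => ?_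
  simp only [eval_mul, eval_onPoly_three_four, excWeight_three_four]
  ring

theorem BMat_eq_multMatrix (N : ℕ) : BMat N = multMatrix excAdmissible_three_four N := by
  ext j k
  refine intervalIntegral.integral_congr fun x _ => ?_
  simp only [eval_mul, eval_pow, eval_sub, eval_X, eval_C, eval_onPoly_three_four,
    excWeight_three_four, bJac_three_four]
  ring

theorem LamMat_eq_eigMatrix (N : ℕ) : LamMat N = eigMatrix 3 4 N := by
  rw [LamMat, eigMatrix]
  congr 1
  funext k
  rw [excEig]
  ring

end

end

theorem jacobi_perline_general (N : ℕ) (hN : 7 ≤ N) :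
    ∃ γ1 γ2 γ3 γ4 γ5 γ6 γ7 γ8 : ℝ,
      ¬(γ1 = 0 ∧ γ2 = 0 ∧ γ3 = 0 ∧ γ4 = 0 ∧ γ5 = 0 ∧ γ6 = 0 ∧ γ7 = 0 ∧ γ8 = 0) ∧
      (∀ c : ℝ,
        γ1 • (1 : Matrix (Fin N) (Fin N) ℝ) + γ2 • LamMat N + γ3 • BMat N
            + γ4 • LamMat N ^ 2
            + γ5 • (LamMat N * BMat N + BMat N * LamMat N)
            + γ6 • (BMat N * LamMat N ^ 2 + LamMat N ^ 2 * BMat N)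
            + γ7 • (LamMat N * BMat N * LamMat N)
            + γ8 • ((LamMat N ^ 3 * BMat N + BMat N * LamMat N ^ 3)
                - (LamMat N * BMat N * LamMat N ^ 2 + LamMat N ^ 2 * BMat N * LamMat N))
          ≠ c • (1 : Matrix (Fin N) (Fin N) ℝ)) ∧
      (γ1 • (1 : Matrix (Fin N) (Fin N) ℝ) + γ2 • LamMat N + γ3 • BMat N
            + γ4 • LamMat N ^ 2
            + γ5 • (LamMat N * BMat N + BMat N * LamMat N)
            + γ6 • (BMat N * LamMat N ^ 2 + LamMat N ^ 2 * BMat N)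
            + γ7 • (LamMat N * BMat N * LamMat N)
            + γ8 • ((LamMat N ^ 3 * BMat N + BMat N * LamMat N ^ 3)
                - (LamMat N * BMat N * LamMat N ^ 2 + LamMat N ^ 2 * BMat N * LamMat N)))
          * MMat N
        = MMat N *
          (γ1 • (1 : Matrix (Fin N) (Fin N) ℝ) + γ2 • LamMat N + γ3 • BMat N
            + γ4 • LamMat N ^ 2
            + γ5 • (LamMat N * BMat N + BMat N * LamMat N)
            + γ6 • (BMat N * LamMat N ^ 2 + LamMat N ^ 2 * BMat N)
            + γ7 • (LamMat N * BMat N * LamMat N)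
            + γ8 • ((LamMat N ^ 3 * BMat N + BMat N * LamMat N ^ 3)
                - (LamMat N * BMat N * LamMat N ^ 2 + LamMat N ^ 2 * BMat N * LamMat N))) := by
  simp only [LamMat_eq_eigMatrix, BMat_eq_multMatrix, MMat_eq_truncGram]
  obtain ⟨γ, hne, hcomm⟩ := jacobi_perline_general_general excAdmissible_three_four
    ⟨1 / 3, by norm_num⟩ (by omega : 3 ≤ N)
  refine ⟨γ.γ₁, γ.γ₂, γ.γ₃, γ.γ₄, γ.γ₅, γ.γ₆, γ.γ₇, γ.γ₈, fun hγ => hne 0 ?_, hne, hcomm⟩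
  simp [PerlineCoeffs.eval, hγ]
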